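/- arXiv:2412.13613 — 5 statements merged into one kernel-verified Lean document; each statement's English description precedes it below -/
import Mathlib

section
/- Let c1(x), c2(x) ∈ R and let C be the one-generator quasi-cyclic code of length 2n and index 2 generated by (c1(x), c2(x)). Then there exist monic polynomials g1(x), g2(x) in F_q[x] dividing x^n - 1, with g_i(x) h_i(x) = x^n - 1 for i = 1, 2, and polynomials r1(x), r2(x) in F_q[x] with gcd(r_i(x), h_i(x)) = 1 for i = 1, 2, such that C equals the one-generator quasi-cyclic code generated by the images in R of (r1(x)g1(x), r2(x)g2(x)). -/
open Polynomial Matrix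

noncomputable section

variable {F : Type*} [Field F] {n : ℕ}

/-- The symplectic inner product on `F^{2n}`. -/
def sympForm (u v : (Fin n ⊕ Fin n) → F) : F :=
  (∑ i : Fin n, u (Sum.inl i) * v (Sum.inr i)) -
    ∑ i : Fin n, v (Sum.inl i) * u (Sum.inr i)

lemma sympForm_add_left (u w v : (Fin n ⊕ Fin n) → F) :
    sympForm (u + w) v = sympForm u v + sympForm w v := by
  simp [sympForm, add_mul, mul_add, Finset.sum_add_distrib]
  ring

lemma sympForm_smul_left (c : F) (u v : (Fin n ⊕ Fin n) → F) :
    sympForm (c • u) v = c * sympForm u v := by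
  simp [sympForm, Finset.mul_sum, mul_sub, mul_assoc, mul_left_comm]

/-- The symplectic dual of a subspace of `F^{2n}`. -/
def sympDual (C : Submodule F ((Fin n ⊕ Fin n) → F)) :
    Submodule F ((Fin n ⊕ Fin n) → F) where
  carrier := {u | ∀ v ∈ C, sympForm u v = 0}
  add_mem' := by
    intro a b ha hb v hv
    rw [sympForm_add_left, ha v hv, hb v hv, add_zero]
  zero_mem' := by
    intro v hv
    have : (0 : (Fin n ⊕ Fin n) → F) = (0 : F) • 0 := by simp
    rw [this, sympForm_smul_left, zero_mul]
  smul_mem' := by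
    intro c a ha v hv
    rw [sympForm_smul_left, ha v hv, mul_zero]

/-- The `2n × 2n` symplectic matrix `Ω`. -/
def Omat (F : Type*) [Field F] (n : ℕ) : Matrix (Fin n ⊕ Fin n) (Fin n ⊕ Fin n) F :=
  Matrix.fromBlocks 0 1 (-1) 0

/-- The row space of a matrix. -/
def rowSpace {ι κ : Type*} (M : Matrix ι κ F) : Submodule F (κ → F) :=
  Submodule.span F (Set.range fun i => M i)

lemma monic_xn_sub_one (F : Type*) [Field F] {n : ℕ} (hn : n ≠ 0) :
    (X ^ n - 1 : F[X]).Monic := by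
  simpa using Polynomial.monic_X_pow_sub_C (1 : F) hn

/-- The coefficient vector of the canonical degree `< n` representative of an
element of `R = F[x]/(x^n - 1)`, as an `F`-linear map. -/
def toVecL (hn : n ≠ 0) : AdjoinRoot (X ^ n - 1 : F[X]) →ₗ[F] (Fin n → F) :=
  (LinearMap.pi fun i : Fin n => Polynomial.lcoeff F (i : ℕ)) ∘ₗ
    AdjoinRoot.modByMonicHom (monic_xn_sub_one F hn)

/-- The linear map `r ↦ (r·a, r·b)` from `R` to `F^{2n}`. -/
def QCgen (hn : n ≠ 0) (a b : AdjoinRoot (X ^ n - 1 : F[X])) :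
    AdjoinRoot (X ^ n - 1 : F[X]) →ₗ[F] ((Fin n ⊕ Fin n) → F) :=
  LinearMap.pi (Sum.elim
    (fun i => LinearMap.proj i ∘ₗ toVecL hn ∘ₗ LinearMap.mulRight F a)
    (fun i => LinearMap.proj i ∘ₗ toVecL hn ∘ₗ LinearMap.mulRight F b))

/-- The one-generator quasi-cyclic code of length `2n` and index `2`
generated by `(a(x), b(x))`, as a subspace of `F^{2n}`. -/
def QCcode (hn : n ≠ 0) (a b : AdjoinRoot (X ^ n - 1 : F[X])) :
    Submodule F ((Fin n ⊕ Fin n) → F) :=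
  LinearMap.range (QCgen hn a b)

/-- The element of `R` with coefficient vector `v`. -/
def fromVec (v : Fin n → F) : AdjoinRoot (X ^ n - 1 : F[X]) :=
  AdjoinRoot.mk _ (∑ i : Fin n, Polynomial.C (v i) * X ^ (i : ℕ))

/-- The transpose polynomial `ā(x) = x^n a(x⁻¹) mod (x^n - 1)`. -/
def transposePoly (hn : n ≠ 0) (a : AdjoinRoot (X ^ n - 1 : F[X])) :
    AdjoinRoot (X ^ n - 1 : F[X]) :=
  fromVec (fun i => toVecL hn a (-i))

/-- The cyclic code of length `n` generated by (the image of) `g(x)`. -/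
def cyclicCode (hn : n ≠ 0) (g : F[X]) : Submodule F (Fin n → F) :=
  LinearMap.range (toVecL hn ∘ₗ
    LinearMap.mulRight F (AdjoinRoot.mk (X ^ n - 1 : F[X]) g))

/-- The Hamming weight of a vector. -/
def hWeight {ι : Type*} (u : ι → F) : ℕ := {i | u i ≠ 0}.ncard

/-!
The generator itself already has the required form, one component at a time: lift `c ∈ R` to a
polynomial `p` and put `g = gcd(p, x^n - 1)`. The cofactors `r = p / g` and `h = (x^n - 1) / g` are
coprime, and `c` is the image of `r g`.
-/

lemma exists_eq_gcd_mul_isCoprime {R : Type*} [CommRing R] [IsDomain R] [IsBezout R] [GCDMonoid R]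
    (a b : R) : ∃ a' b' : R, a = gcd a b * a' ∧ b = gcd a b * b' ∧ IsCoprime a' b' := by
  obtain ⟨a', b', ha, hb, hunit⟩ := extract_gcd a b
  exact ⟨a', b', ha, hb, (gcd_isUnit_iff a' b').mp hunit⟩

lemma exists_monic_mul_eq_mul_eq_isCoprime {K : Type*} [Field K] (p : K[X]) {q : K[X]}
    (hq : q ≠ 0) :
    ∃ g h r : K[X], g.Monic ∧ g * h = q ∧ r * g = p ∧ IsCoprime r h := by
  classical
  obtain ⟨r, h, hr, hh, hrh⟩ := exists_eq_gcd_mul_isCoprime p q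
  have hgcd : gcd p q ≠ 0 := gcd_ne_zero_of_right hq
  have hmonic : (gcd p q).Monic := (normalize_eq_self_iff_monic hgcd).mp (normalize_gcd p q)
  exact ⟨gcd p q, h, r, hmonic, hh.symm, (mul_comm _ _).trans hr.symm, hrh⟩

lemma exists_monic_mul_eq_isCoprime_mk_mul_eq {K : Type*} [Field K] {f : K[X]} (hf : f ≠ 0)
    (c : AdjoinRoot f) :
    ∃ g h r : K[X], g.Monic ∧ g * h = f ∧ IsCoprime r h ∧ AdjoinRoot.mk f (r * g) = c := by
  obtain ⟨p, rfl⟩ := AdjoinRoot.mk_surjective c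
  obtain ⟨g, h, r, hg, hgh, rfl, hrh⟩ := exists_monic_mul_eq_mul_eq_isCoprime p hf
  exact ⟨g, h, r, hg, hgh, hrh, rfl⟩

theorem oneGenQC_generator_form_general
    {F : Type*} [Field F] {n : ℕ} (hn : n ≠ 0)
    (c₁ c₂ : AdjoinRoot (X ^ n - 1 : F[X])) :
    ∃ g₁ g₂ h₁ h₂ r₁ r₂ : F[X],
      g₁.Monic ∧ g₂.Monic ∧
      g₁ * h₁ = X ^ n - 1 ∧ g₂ * h₂ = X ^ n - 1 ∧
      IsCoprime r₁ h₁ ∧ IsCoprime r₂ h₂ ∧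
      QCcode hn c₁ c₂ =
        QCcode hn (AdjoinRoot.mk (X ^ n - 1 : F[X]) (r₁ * g₁))
          (AdjoinRoot.mk (X ^ n - 1 : F[X]) (r₂ * g₂)) := by
  have hne : (X ^ n - 1 : F[X]) ≠ 0 := (monic_xn_sub_one F hn).ne_zero
  obtain ⟨g₁, h₁, r₁, hg₁, hgh₁, hrh₁, rfl⟩ := exists_monic_mul_eq_isCoprime_mk_mul_eq hne c₁
  obtain ⟨g₂, h₂, r₂, hg₂, hgh₂, hrh₂, rfl⟩ := exists_monic_mul_eq_isCoprime_mk_mul_eq hne c₂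
  exact ⟨g₁, g₂, h₁, h₂, r₁, r₂, hg₁, hg₂, hgh₁, hgh₂, hrh₁, hrh₂, rfl⟩

/-- Every one-generator quasi-cyclic code of length `2n` and
index `2` has a generator of the form `(r₁(x)g₁(x), r₂(x)g₂(x))` with
`gᵢ(x)hᵢ(x) = xⁿ - 1` and `gcd(rᵢ(x), hᵢ(x)) = 1` for `i = 1, 2`. -/
theorem oneGenQC_generator_form
    {F : Type*} [Field F] [Fintype F] {n : ℕ} (hn : n ≠ 0)
    (c₁ c₂ : AdjoinRoot (X ^ n - 1 : F[X])) :
    ∃ g₁ g₂ h₁ h₂ r₁ r₂ : F[X],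
      g₁.Monic ∧ g₂.Monic ∧
      g₁ * h₁ = X ^ n - 1 ∧ g₂ * h₂ = X ^ n - 1 ∧
      IsCoprime r₁ h₁ ∧ IsCoprime r₂ h₂ ∧
      QCcode hn c₁ c₂ =
        QCcode hn (AdjoinRoot.mk (X ^ n - 1 : F[X]) (r₁ * g₁))
          (AdjoinRoot.mk (X ^ n - 1 : F[X]) (r₂ * g₂)) :=
  oneGenQC_generator_form_general hn c₁ c₂

end
end

section
/- Let g1(x), g2(x) be monic divisors of x^n - 1 in F_q[x] with g_i(x) h_i(x) = x^n - 1 for i = 1, 2, and let r1(x), r2(x) in F_q[x] satisfy gcd(r_i(x), h_i(x)) = 1 for i = 1, 2. Let C be the one-generator quasi-cyclic code of length 2n and index 2 generated by the images in R of (r1(x)g1(x), r2(x)g2(x)). Then dim_{F_q}(C) = deg(h(x)), where h(x) = lcm(h1(x), h2(x)). -/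
/-!
Pulled back to polynomials, the encoding map sends `p` to the coefficient vector of
`(p r₁ g₁, p r₂ g₂)` modulo `xⁿ - 1`. The `i`-th component vanishes iff `gᵢ hᵢ ∣ p rᵢ gᵢ`, that is,
iff `hᵢ ∣ p` (cancel `gᵢ`, then use that `rᵢ` is coprime to `hᵢ`). So the kernel is the ideal
generated by `lcm(h₁, h₂)`, and the code is isomorphic to `F[x] / (lcm(h₁, h₂))`.
-/

open Polynomial Matrix

noncomputable section
open scoped Classical

variable {F : Type*} [Field F] {n : ℕ}

lemma mul_dvd_mul_mul_iff_of_isCoprime {R : Type*} [CommSemiring R] [IsLeftCancelMulZero R]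
    {g h r : R} (p : R) (hg : g ≠ 0) (hr : IsCoprime r h) : g * h ∣ p * (r * g) ↔ h ∣ p := by
  rw [show p * (r * g) = g * (r * p) by ring, mul_dvd_mul_iff_left hg]
  exact ⟨hr.symm.dvd_of_dvd_mul_left, fun hp => hp.mul_left r⟩

lemma adjoinRoot_mk_mul_mk_eq_zero_iff_dvd {R : Type*} [CommRing R] [NoZeroDivisors R]
    {f g h r : R[X]} (p : R[X]) (hg : g ≠ 0) (hgh : g * h = f) (hr : IsCoprime r h) :
    AdjoinRoot.mk f p * AdjoinRoot.mk f (r * g) = 0 ↔ h ∣ p := by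
  rw [← map_mul, AdjoinRoot.mk_eq_zero, ← hgh, mul_dvd_mul_mul_iff_of_isCoprime p hg hr]

lemma finrank_range_eq_natDegree_of_apply_mk_eq_zero_iff {V : Type*} [AddCommGroup V] [Module F V]
    {f l : F[X]} (φ : AdjoinRoot f →ₗ[F] V) (hφ : ∀ p, φ (AdjoinRoot.mk f p) = 0 ↔ l ∣ p) :
    Module.finrank F (LinearMap.range φ) = l.natDegree := by
  let ψ : F[X] →ₗ[F] V := φ ∘ₗ (AdjoinRoot.mkₐ f).toLinearMap
  have hker : LinearMap.ker ψ = (Ideal.span {l}).restrictScalars F := by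
    ext p
    exact (hφ p).trans Ideal.mem_span_singleton.symm
  have hrange : LinearMap.range ψ = LinearMap.range φ :=
    LinearMap.range_comp_of_range_eq_top φ (LinearMap.range_eq_top.2 AdjoinRoot.mk_surjective)
  rw [← hrange, ← ψ.quotKerEquivRange.finrank_eq, hker]
  exact finrank_quotient_span_eq_natDegree

lemma toVecL_injective (hn : n ≠ 0) :
    Function.Injective (toVecL hn : AdjoinRoot (X ^ n - 1 : F[X]) →ₗ[F] (Fin n → F)) := by
  intro a b hab
  have hdeg : (X ^ n - 1 : F[X]).natDegree = n := natDegree_X_pow_sub_C (r := (1 : F))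
  exact (AdjoinRoot.powerBasisAux' (monic_xn_sub_one F hn)).ext_elem fun i =>
    congrFun hab (i.cast hdeg)

lemma QCgen_eq_sumElim (hn : n ≠ 0) (a b c : AdjoinRoot (X ^ n - 1 : F[X])) :
    QCgen hn a b c = Sum.elim (toVecL hn (c * a)) (toVecL hn (c * b)) := by
  ext (i | i) <;> rfl

lemma QCgen_eq_zero_iff (hn : n ≠ 0) (a b c : AdjoinRoot (X ^ n - 1 : F[X])) :
    QCgen hn a b c = 0 ↔ c * a = 0 ∧ c * b = 0 := by
  rw [QCgen_eq_sumElim, ← Sum.elim_zero_zero, Sum.elim_eq_iff,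
    map_eq_zero_iff _ (toVecL_injective hn), map_eq_zero_iff _ (toVecL_injective hn)]

theorem oneGenQC_dim_eq_deg_lcm_general (hn : n ≠ 0) (g₁ g₂ h₁ h₂ r₁ r₂ : F[X])
    (hgh₁ : g₁ * h₁ = X ^ n - 1) (hgh₂ : g₂ * h₂ = X ^ n - 1)
    (hr₁ : IsCoprime r₁ h₁) (hr₂ : IsCoprime r₂ h₂) :
    Module.finrank F
        (QCcode hn (AdjoinRoot.mk (X ^ n - 1 : F[X]) (r₁ * g₁))
          (AdjoinRoot.mk (X ^ n - 1 : F[X]) (r₂ * g₂))) =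
      (EuclideanDomain.lcm h₁ h₂).natDegree := by
  have hf : (X ^ n - 1 : F[X]) ≠ 0 := (monic_xn_sub_one F hn).ne_zero
  have hg₁ : g₁ ≠ 0 := left_ne_zero_of_mul (hgh₁ ▸ hf)
  have hg₂ : g₂ ≠ 0 := left_ne_zero_of_mul (hgh₂ ▸ hf)
  refine finrank_range_eq_natDegree_of_apply_mk_eq_zero_iff _ fun p => ?_
  rw [QCgen_eq_zero_iff, adjoinRoot_mk_mul_mk_eq_zero_iff_dvd p hg₁ hgh₁ hr₁,
    adjoinRoot_mk_mul_mk_eq_zero_iff_dvd p hg₂ hgh₂ hr₂, EuclideanDomain.lcm_dvd_iff]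

/-- If `C = (r₁(x)g₁(x), r₂(x)g₂(x))` is a one-generator QC
code with `gᵢhᵢ = xⁿ - 1` and `gcd(rᵢ, hᵢ) = 1` for `i = 1, 2`, then
`dim C = deg (lcm(h₁, h₂))`. -/
theorem oneGenQC_dim_eq_deg_lcm
    {F : Type*} [Field F] [Fintype F] {n : ℕ} (hn : n ≠ 0)
    (g₁ g₂ h₁ h₂ r₁ r₂ : F[X])
    (hg₁ : g₁.Monic) (hg₂ : g₂.Monic)
    (hgh₁ : g₁ * h₁ = X ^ n - 1) (hgh₂ : g₂ * h₂ = X ^ n - 1)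
    (hr₁ : IsCoprime r₁ h₁) (hr₂ : IsCoprime r₂ h₂) :
    Module.finrank F
        (QCcode hn (AdjoinRoot.mk (X ^ n - 1 : F[X]) (r₁ * g₁))
          (AdjoinRoot.mk (X ^ n - 1 : F[X]) (r₂ * g₂))) =
      (EuclideanDomain.lcm h₁ h₂).natDegree :=
  oneGenQC_dim_eq_deg_lcm_general hn g₁ g₂ h₁ h₂ r₁ r₂ hgh₁ hgh₂ hr₁ hr₂

end
end

section
/- Let a(x), b(x) ∈ R and let C be the one-generator quasi-cyclic code of length 2n and index 2 generated by (a(x), b(x)). Then C ⊆ C^{⊥s} if and only if a(x)·b̄(x) - b(x)·ā(x) ≡ 0 mod (x^n - 1), where ā(x) and b̄(x) are the transpose polynomials of a(x) and b(x). -/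
open Polynomial Matrix

noncomputable section

variable {F : Type*} [Field F] {n : ℕ}

/-!
The Euclidean inner product of the coefficient vectors of `u` and `v` is the constant coefficient of
`u v̄`, and transposition is the automorphism `x ↦ x⁻¹` of `F[x]/(xⁿ - 1)`. Hence multiplication
by `w̄` is adjoint to multiplication by `w`, and the symplectic product of `(r a, r b)` and
`(s c, s d)` is the Euclidean product of `r (a d̄ - b c̄)` and `s`. The Euclidean form is
nondegenerate, so this vanishes for all `r` and `s` exactly when `a d̄ - b c̄ = 0`.
-/

section CyclicPowers

variable {M : Type*} [Monoid M] {x : M}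

lemma pow_fin_val_add (hx : x ^ n = 1) (i j : Fin n) :
    x ^ ((i + j : Fin n) : ℕ) = x ^ (i : ℕ) * x ^ (j : ℕ) := by
  rw [Fin.val_add, ← pow_eq_pow_mod _ hx, pow_add]

lemma pow_fin_val_neg_mul_pow_fin_val (hx : x ^ n = 1) (i : Fin n) :
    x ^ ((-i : Fin n) : ℕ) * x ^ (i : ℕ) = 1 := by
  have : NeZero n := i.neZero
  rw [← pow_fin_val_add hx, neg_add_cancel, Fin.val_zero, pow_zero]

end CyclicPowers

section TransposeHom

variable {R : Type*} [CommRing R]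

lemma root_X_pow_sub_one_pow : AdjoinRoot.root (X ^ n - 1 : R[X]) ^ n = 1 := by
  have h : AdjoinRoot.mk (X ^ n - 1 : R[X]) (X ^ n - 1) = 0 := AdjoinRoot.mk_self
  rwa [map_sub, map_pow, AdjoinRoot.mk_X, map_one, sub_eq_zero] at h

/-- Transposition `a(x) ↦ a(x⁻¹)` as an endomorphism of `R[x]/(xⁿ - 1)`, the inverse of `x` being
written `xⁿ⁻¹`. -/
def transposeHom (R : Type*) [CommRing R] (n : ℕ) :
    AdjoinRoot (X ^ n - 1 : R[X]) →ₐ[R] AdjoinRoot (X ^ n - 1 : R[X]) :=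
  AdjoinRoot.liftAlgHom _ (Algebra.ofId R _) (AdjoinRoot.root (X ^ n - 1 : R[X]) ^ (n - 1)) <| by
    rw [eval₂_sub, eval₂_X_pow, eval₂_one, pow_right_comm, root_X_pow_sub_one_pow, one_pow,
      sub_self]

lemma transposeHom_root :
    transposeHom R n (AdjoinRoot.root _) = AdjoinRoot.root (X ^ n - 1 : R[X]) ^ (n - 1) :=
  AdjoinRoot.liftAlgHom_root ..

lemma transposeHom_root_pow_fin_val (i : Fin n) :
    transposeHom R n (AdjoinRoot.root _ ^ (i : ℕ)) =
      AdjoinRoot.root (X ^ n - 1 : R[X]) ^ ((-i : Fin n) : ℕ) := by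
  have hinv : AdjoinRoot.root (X ^ n - 1 : R[X]) ^ (i : ℕ) *
      transposeHom R n (AdjoinRoot.root _ ^ (i : ℕ)) = 1 := by
    rw [map_pow, transposeHom_root, ← mul_pow, mul_pow_sub_one i.pos.ne', root_X_pow_sub_one_pow,
      one_pow]
  exact (left_inv_eq_right_inv (pow_fin_val_neg_mul_pow_fin_val root_X_pow_sub_one_pow i) hinv).symm

end TransposeHom

section CoefficientVector

lemma fromVec_eq_sum (v : Fin n → F) :
    fromVec v = ∑ i, v i • AdjoinRoot.root (X ^ n - 1 : F[X]) ^ (i : ℕ) := by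
  simp [fromVec, Algebra.smul_def, AdjoinRoot.algebraMap_eq]

lemma natDegree_X_pow_sub_one {R : Type*} [Ring R] [Nontrivial R] :
    (X ^ n - 1 : R[X]).natDegree = n := by
  simpa using natDegree_X_pow_sub_C (n := n) (r := (1 : R))

variable (hn : n ≠ 0)

lemma toVecL_mk (p : F[X]) (i : Fin n) :
    toVecL hn (AdjoinRoot.mk _ p) i = (p %ₘ (X ^ n - 1)).coeff i := by
  simp [toVecL, AdjoinRoot.modByMonicHom_mk]

lemma fromVec_toVecL (a : AdjoinRoot (X ^ n - 1 : F[X])) : fromVec (toVecL hn a) = a := by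
  have hmonic := monic_xn_sub_one F hn
  obtain ⟨p, rfl⟩ := AdjoinRoot.mk_surjective a
  have hdeg : (p %ₘ (X ^ n - 1)).natDegree < n := by
    simpa [natDegree_X_pow_sub_one] using natDegree_modByMonic_lt p hmonic
      (ne_of_apply_ne natDegree (by simpa [natDegree_X_pow_sub_one] using hn))
  simp only [fromVec, toVecL_mk]
  rw [Fin.sum_univ_eq_sum_range (fun i => C ((p %ₘ (X ^ n - 1)).coeff i) * X ^ i) n,
    ← as_sum_range_C_mul_X_pow' _ hdeg]
  exact AdjoinRoot.mk_leftInverse hmonic (AdjoinRoot.mk _ p)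

lemma sum_toVecL_smul_root_pow (a : AdjoinRoot (X ^ n - 1 : F[X])) :
    ∑ i, toVecL hn a i • AdjoinRoot.root (X ^ n - 1 : F[X]) ^ (i : ℕ) = a := by
  rw [← fromVec_eq_sum, fromVec_toVecL]

lemma toVecL_root_pow (j : Fin n) :
    toVecL hn (AdjoinRoot.root (X ^ n - 1 : F[X]) ^ (j : ℕ)) = Pi.single j 1 := by
  have hmod : (X ^ (j : ℕ) : F[X]) %ₘ (X ^ n - 1) = X ^ (j : ℕ) := by
    refine (modByMonic_eq_self_iff (monic_xn_sub_one F hn)).2 (degree_lt_degree ?_)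
    rw [natDegree_X_pow, natDegree_X_pow_sub_one]
    exact j.isLt
  ext i
  rw [← AdjoinRoot.mk_X, ← map_pow, toVecL_mk, hmod, coeff_X_pow]
  simp [Pi.single_apply, Fin.ext_iff]

lemma toVecL_fromVec (v : Fin n → F) : toVecL hn (fromVec v) = v := by
  simp only [fromVec_eq_sum, map_sum, map_smul, toVecL_root_pow]
  exact (pi_eq_sum_univ' v).symm

lemma transposePoly_eq_transposeHom (a : AdjoinRoot (X ^ n - 1 : F[X])) :
    transposePoly hn a = transposeHom F n a := by
  calc transposePoly hn a
    _ = ∑ i, toVecL hn a (-i) • AdjoinRoot.root (X ^ n - 1 : F[X]) ^ (i : ℕ) := fromVec_eq_sum _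
    _ = ∑ i, toVecL hn a i • AdjoinRoot.root (X ^ n - 1 : F[X]) ^ ((-i : Fin n) : ℕ) := by
      rw [← Equiv.sum_comp (Equiv.neg (Fin n))]
      simp only [Equiv.neg_apply, neg_neg]
    _ = transposeHom F n (∑ i, toVecL hn a i • AdjoinRoot.root _ ^ (i : ℕ)) := by
      simp only [map_sum, map_smul, transposeHom_root_pow_fin_val]
    _ = transposeHom F n a := by rw [sum_toVecL_smul_root_pow]

end CoefficientVector

section EuclideanForm

lemma toVecL_mul_root_pow_neg_apply_zero [NeZero n] (u : AdjoinRoot (X ^ n - 1 : F[X]))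
    (j : Fin n) :
    toVecL (NeZero.ne n) (u * AdjoinRoot.root _ ^ ((-j : Fin n) : ℕ)) 0 =
      toVecL (NeZero.ne n) u j := by
  conv_lhs => rw [← sum_toVecL_smul_root_pow (NeZero.ne n) u]
  simp only [Finset.sum_mul, smul_mul_assoc, ← pow_fin_val_add root_X_pow_sub_one_pow, map_sum,
    map_smul, toVecL_root_pow, Finset.sum_apply, Pi.smul_apply, Pi.single_apply, smul_eq_mul]
  simp [← sub_eq_add_neg, eq_comm (a := (0 : Fin n)), sub_eq_zero]

lemma toVecL_dotProduct_toVecL [NeZero n] (u v : AdjoinRoot (X ^ n - 1 : F[X])) :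
    toVecL (NeZero.ne n) u ⬝ᵥ toVecL (NeZero.ne n) v =
      toVecL (NeZero.ne n) (u * transposeHom F n v) 0 := by
  conv_rhs => rw [← sum_toVecL_smul_root_pow (NeZero.ne n) v]
  simp only [map_sum, map_smul, transposeHom_root_pow_fin_val, Finset.mul_sum, mul_smul_comm,
    Finset.sum_apply, Pi.smul_apply, toVecL_mul_root_pow_neg_apply_zero, smul_eq_mul]
  exact dotProduct_comm _ _

variable (hn : n ≠ 0)

lemma toVecL_dotProduct_toVecL_mul (u v w : AdjoinRoot (X ^ n - 1 : F[X])) :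
    toVecL hn u ⬝ᵥ toVecL hn (v * w) = toVecL hn (u * transposePoly hn w) ⬝ᵥ toVecL hn v := by
  have : NeZero n := ⟨hn⟩
  rw [toVecL_dotProduct_toVecL, toVecL_dotProduct_toVecL, transposePoly_eq_transposeHom,
    map_mul (transposeHom F n), mul_assoc, mul_comm (transposeHom F n v)]

lemma forall_toVecL_dotProduct_toVecL_eq_zero_iff {u : AdjoinRoot (X ^ n - 1 : F[X])} :
    (∀ s, toVecL hn u ⬝ᵥ toVecL hn s = 0) ↔ u = 0 := by
  have hsurj : Function.Surjective (toVecL (F := F) hn) :=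
    Function.RightInverse.surjective (toVecL_fromVec hn)
  have hinj : Function.Injective (toVecL (F := F) hn) :=
    Function.LeftInverse.injective (fromVec_toVecL hn)
  rw [← hsurj.forall (p := fun w => toVecL hn u ⬝ᵥ w = 0), dotProduct_eq_zero_iff,
    map_eq_zero_iff _ hinj]

end EuclideanForm

section SymplecticForm

variable (hn : n ≠ 0)

lemma sympForm_QCgen (a b c d r s : AdjoinRoot (X ^ n - 1 : F[X])) :
    sympForm (QCgen hn a b r) (QCgen hn c d s) =
      toVecL hn (r * (a * transposePoly hn d - b * transposePoly hn c)) ⬝ᵥ toVecL hn s :=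
  calc sympForm (QCgen hn a b r) (QCgen hn c d s)
    _ = toVecL hn (r * a) ⬝ᵥ toVecL hn (s * d) - toVecL hn (s * c) ⬝ᵥ toVecL hn (r * b) := rfl
    _ = toVecL hn (r * a * transposePoly hn d) ⬝ᵥ toVecL hn s -
          toVecL hn (r * b * transposePoly hn c) ⬝ᵥ toVecL hn s := by
      rw [dotProduct_comm (toVecL hn (s * c)), toVecL_dotProduct_toVecL_mul,
        toVecL_dotProduct_toVecL_mul]
    _ = _ := by rw [← sub_dotProduct, ← map_sub, mul_sub, mul_assoc, mul_assoc]

lemma QCcode_le_sympDual_QCcode_iff (a b c d : AdjoinRoot (X ^ n - 1 : F[X])) :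
    QCcode hn a b ≤ sympDual (QCcode hn c d) ↔
      ∀ r s, sympForm (QCgen hn a b r) (QCgen hn c d s) = 0 := by
  constructor
  · exact fun h r s => h (LinearMap.mem_range_self _ r) _ (LinearMap.mem_range_self _ s)
  · rintro h _ ⟨r, rfl⟩ _ ⟨s, rfl⟩
    exact h r s

theorem oneGenQC_selfOrthogonal_iff_poly_general (a b c d : AdjoinRoot (X ^ n - 1 : F[X])) :
    QCcode hn a b ≤ sympDual (QCcode hn c d) ↔
      a * transposePoly hn d - b * transposePoly hn c = 0 := by
  simp only [QCcode_le_sympDual_QCcode_iff, sympForm_QCgen,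
    forall_toVecL_dotProduct_toVecL_eq_zero_iff]
  exact ⟨fun h => by simpa using h 1, fun h r => by rw [h, mul_zero]⟩

end SymplecticForm

/-- The one-generator QC code generated by `(a(x), b(x))` is
symplectic self-orthogonal iff
`a(x)·b̄(x) - b(x)·ā(x) ≡ 0 mod (xⁿ - 1)`. -/
theorem oneGenQC_selfOrthogonal_iff_poly
    {F : Type*} [Field F] [Fintype F] {n : ℕ} (hn : n ≠ 0)
    (a b : AdjoinRoot (X ^ n - 1 : F[X])) :
    QCcode hn a b ≤ sympDual (QCcode hn a b) ↔
      a * transposePoly hn b - b * transposePoly hn a = 0 :=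
  oneGenQC_selfOrthogonal_iff_poly_general hn a b a b

end
end

section
/- Let a_1(x), b_1(x), a_2(x), b_2(x) ∈ R, let A_i and B_i be the n×n circulant matrices generated by a_i(x) and b_i(x) for i = 1, 2, and let C ⊆ F_q^{2n} be the row space of the 2n×2n block matrix G = ((A_1, B_1), (A_2, B_2)), i.e., the two-generator quasi-cyclic code of length 2n and index 2 generated by (a_1(x), b_1(x)) and (a_2(x), b_2(x)). Then C ⊆ C^{⊥s} if and only if A_1 B_1ᵗ = B_1 A_1ᵗ, A_2 B_2ᵗ = B_2 A_2ᵗ, and A_1 B_2ᵗ = B_1 A_2ᵗ, where Aᵗ denotes the transpose of A. -/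
open Polynomial Matrix

noncomputable section

variable {F : Type*} [Field F] {n : ℕ}

/-!
Since `⟨u, v⟩ₛ = u Ω vᵗ` is bilinear, the row space of `G` is self-orthogonal iff all pairs of rows
of `G` are orthogonal, that is, iff `G Ω Gᵗ = 0`. The `2 × 2` block form of this equation consists
of four conditions `Aᵢ Bⱼᵗ = Bᵢ Aⱼᵗ`, and the two with `i ≠ j` are transposes of each other.
-/

lemma sympForm_eq_toLinearMap₂' (u v : (Fin n ⊕ Fin n) → F) :
    sympForm u v = Matrix.toLinearMap₂' F (Omat F n) u v := by
  have Omat_mulVec : Omat F n *ᵥ v = Sum.elim (v ∘ Sum.inr) (-(v ∘ Sum.inl)) := by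
    simp [Omat, fromBlocks_mulVec, neg_mulVec]
  simp [toLinearMap₂'_apply', Omat_mulVec, sympForm, dotProduct, mul_comm, sub_eq_add_neg]

lemma mem_sympDual_span_iff {u : (Fin n ⊕ Fin n) → F} {T : Set ((Fin n ⊕ Fin n) → F)} :
    u ∈ sympDual (Submodule.span F T) ↔ ∀ v ∈ T, sympForm u v = 0 := by
  change (∀ v ∈ Submodule.span F T, sympForm u v = 0) ↔ _
  simp only [sympForm_eq_toLinearMap₂']
  exact Submodule.span_le (p := LinearMap.ker (Matrix.toLinearMap₂' F (Omat F n) u))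

lemma span_le_sympDual_span_iff {S T : Set ((Fin n ⊕ Fin n) → F)} :
    Submodule.span F S ≤ sympDual (Submodule.span F T) ↔
      ∀ u ∈ S, ∀ v ∈ T, sympForm u v = 0 :=
  Submodule.span_le.trans (forall₂_congr fun _ _ => mem_sympDual_span_iff)

lemma mul_Omat_mul_transpose_apply {ι κ : Type*} (M : Matrix ι (Fin n ⊕ Fin n) F)
    (N : Matrix κ (Fin n ⊕ Fin n) F) (i : ι) (j : κ) :
    (M * Omat F n * Nᵀ) i j = sympForm (M i) (N j) := by
  rw [sympForm_eq_toLinearMap₂', toLinearMap₂'_apply', dotProduct_mulVec]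
  rfl

lemma rowSpace_le_sympDual_rowSpace_iff {ι κ : Type*} (M : Matrix ι (Fin n ⊕ Fin n) F)
    (N : Matrix κ (Fin n ⊕ Fin n) F) :
    rowSpace M ≤ sympDual (rowSpace N) ↔ M * Omat F n * Nᵀ = 0 := by
  simp only [rowSpace, span_le_sympDual_span_iff, Set.forall_mem_range, ← Matrix.ext_iff,
    mul_Omat_mul_transpose_apply, Matrix.zero_apply]

lemma fromBlocks_mul_Omat_mul_transpose {ι₁ ι₂ κ₁ κ₂ : Type*}
    (A₁ B₁ : Matrix ι₁ (Fin n) F) (A₂ B₂ : Matrix ι₂ (Fin n) F)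
    (A₁' B₁' : Matrix κ₁ (Fin n) F) (A₂' B₂' : Matrix κ₂ (Fin n) F) :
    fromBlocks A₁ B₁ A₂ B₂ * Omat F n * (fromBlocks A₁' B₁' A₂' B₂')ᵀ =
      fromBlocks (A₁ * B₁'ᵀ - B₁ * A₁'ᵀ) (A₁ * B₂'ᵀ - B₁ * A₂'ᵀ)
        (A₂ * B₁'ᵀ - B₂ * A₁'ᵀ) (A₂ * B₂'ᵀ - B₂ * A₂'ᵀ) := by
  simp [Omat, fromBlocks_multiply, fromBlocks_transpose, neg_add_eq_sub]

lemma mul_transpose_eq_mul_transpose_comm {ι κ m R : Type*} [Fintype m] [AddCommMonoid R]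
    [CommMagma R] {A B : Matrix ι m R} {A' B' : Matrix κ m R} :
    A * B'ᵀ = B * A'ᵀ ↔ A' * Bᵀ = B' * Aᵀ := by
  rw [← transpose_inj, transpose_mul, transpose_mul, transpose_transpose, transpose_transpose,
    eq_comm]

theorem twoGenQC_selfOrthogonal_iff_matrix_general {ι₁ ι₂ : Type*}
    (A₁ B₁ : Matrix ι₁ (Fin n) F) (A₂ B₂ : Matrix ι₂ (Fin n) F)
    (C : Submodule F ((Fin n ⊕ Fin n) → F))
    (hC : C = rowSpace (fromBlocks A₁ B₁ A₂ B₂)) :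
    C ≤ sympDual C ↔
      A₁ * B₁ᵀ = B₁ * A₁ᵀ ∧ A₂ * B₂ᵀ = B₂ * A₂ᵀ ∧ A₁ * B₂ᵀ = B₁ * A₂ᵀ := by
  rw [hC, rowSpace_le_sympDual_rowSpace_iff, fromBlocks_mul_Omat_mul_transpose, ← fromBlocks_zero,
    fromBlocks_inj]
  simp only [sub_eq_zero]
  have off_diagonal : A₂ * B₁ᵀ = B₂ * A₁ᵀ ↔ A₁ * B₂ᵀ = B₁ * A₂ᵀ :=
    mul_transpose_eq_mul_transpose_comm
  tauto

/-- A two-generator QC code of length `2n` and index `2` with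
generator matrix `G = ((A₁, B₁), (A₂, B₂))`, built from the circulant matrices
of `a₁, b₁, a₂, b₂`, is symplectic self-orthogonal iff `A₁B₁ᵗ = B₁A₁ᵗ`,
`A₂B₂ᵗ = B₂A₂ᵗ` and `A₁B₂ᵗ = B₁A₂ᵗ`. -/
theorem twoGenQC_selfOrthogonal_iff_matrix
    {F : Type*} [Field F] [Fintype F] {n : ℕ} (hn : n ≠ 0)
    (a₁ b₁ a₂ b₂ : AdjoinRoot (X ^ n - 1 : F[X]))
    (A₁ B₁ A₂ B₂ : Matrix (Fin n) (Fin n) F)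
    (hA₁ : A₁ = Matrix.circulant (toVecL hn a₁))
    (hB₁ : B₁ = Matrix.circulant (toVecL hn b₁))
    (hA₂ : A₂ = Matrix.circulant (toVecL hn a₂))
    (hB₂ : B₂ = Matrix.circulant (toVecL hn b₂))
    (C : Submodule F ((Fin n ⊕ Fin n) → F))
    (hC : C = rowSpace (Matrix.fromBlocks A₁ B₁ A₂ B₂)) :
    C ≤ sympDual C ↔
      A₁ * B₁ᵀ = B₁ * A₁ᵀ ∧ A₂ * B₂ᵀ = B₂ * A₂ᵀ ∧ A₁ * B₂ᵀ = B₁ * A₂ᵀ :=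
  twoGenQC_selfOrthogonal_iff_matrix_general A₁ B₁ A₂ B₂ C hC

end
end

section
/- Let C ⊆ F_q^{2n} be a linear code, let p_1(x), q_1(x), p_2(x), q_2(x) ∈ R, let P_i and Q_i be the n×n circulant matrices generated by p_i(x) and q_i(x) for i = 1, 2, and suppose the row space of the 2n×2n block matrix H = ((P_1, Q_1), (P_2, Q_2)) equals the symplectic dual C^{⊥s}. Then C^{⊥s} ⊆ C if and only if P_1 Q_1ᵗ = Q_1 P_1ᵗ, P_2 Q_2ᵗ = Q_2 P_2ᵗ, and P_1 Q_2ᵗ = Q_1 P_2ᵗ, where Pᵗ denotes the transpose of P. -/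
open Polynomial Matrix

noncomputable section

variable {F : Type*} [Field F] {n : ℕ}

/-!
The symplectic form is the bilinear form of `Ω`, which is alternating and nondegenerate, so
`C^{⊥s⊥s} = C`. Hence `C^{⊥s} ⊆ C` says that `C^{⊥s}`, the row space of `H`, is isotropic, that is
`H Ω Hᵗ = 0`. The diagonal blocks of `H Ω Hᵗ` are `P₁Q₁ᵗ - Q₁P₁ᵗ` and `P₂Q₂ᵗ - Q₂P₂ᵗ`; the
off-diagonal ones are `P₁Q₂ᵗ - Q₁P₂ᵗ` and its negative transpose.
-/

section BilinearForm

variable {ι κ l m : Type*} [Fintype l] [DecidableEq l] [Fintype m] [DecidableEq m]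

lemma toLinearMap₂'_row_row {R : Type*} [CommSemiring R] (M : Matrix ι l R) (A : Matrix l m R)
    (N : Matrix κ m R) (i : ι) (j : κ) :
    toLinearMap₂' R A (M i) (N j) = (M * A * Nᵀ) i j := by
  rw [toLinearMap₂'_apply', dotProduct_mulVec, ← mul_apply_eq_vecMul]
  rfl

lemma forall_rowSpace_toLinearMap₂'_eq_zero_iff (M : Matrix ι l F) (A : Matrix l m F)
    (N : Matrix κ m F) :
    (∀ u ∈ rowSpace M, ∀ v ∈ rowSpace N, toLinearMap₂' F A u v = 0) ↔ M * A * Nᵀ = 0 := by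
  simp only [← Matrix.ext_iff, Matrix.zero_apply, ← toLinearMap₂'_row_row]
  refine ⟨fun h i j => h _ (Submodule.subset_span ⟨i, rfl⟩) _ (Submodule.subset_span ⟨j, rfl⟩),
    fun h u hu v hv => ?_⟩
  have row_left (i : ι) : toLinearMap₂' F A (M i) v = 0 :=
    LinearMap.eqOn_span (g := 0) (Set.forall_mem_range.2 (h i)) hv
  exact LinearMap.eqOn_span (f := (toLinearMap₂' F A).flip v) (g := 0)
    (Set.forall_mem_range.2 row_left) hu

end BilinearForm

lemma Omat_eq_neg_J : Omat F n = -J (Fin n) F := by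
  simp [Omat, J, fromBlocks_neg]

lemma isUnit_det_Omat : IsUnit (Omat F n).det := by
  rw [Omat_eq_neg_J, det_neg]
  exact (isUnit_one.neg.pow _).mul (isUnit_det_J _ F)

lemma toBilin'_Omat_apply (u v : (Fin n ⊕ Fin n) → F) :
    toBilin' (Omat F n) u v = sympForm u v := by
  simp [toBilin'_apply', Omat, sympForm, fromBlocks_mulVec, dotProduct, neg_mulVec,
    sub_eq_add_neg, mul_comm]

lemma isAlt_toBilin'_Omat : (toBilin' (Omat F n)).IsAlt := fun u => by
  rw [toBilin'_Omat_apply, sympForm, sub_self]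

lemma nondegenerate_toBilin'_Omat : (toBilin' (Omat F n)).Nondegenerate :=
  LinearMap.BilinForm.nondegenerate_toBilin'_of_det_ne_zero' _ isUnit_det_Omat.ne_zero

lemma sympDual_eq_orthogonal (C : Submodule F ((Fin n ⊕ Fin n) → F)) :
    sympDual C = (toBilin' (Omat F n)).orthogonal C := by
  ext u
  refine forall₂_congr fun v _ => ?_
  rw [← toBilin'_Omat_apply]
  exact isAlt_toBilin'_Omat.isRefl.eq_iff

lemma sympDual_sympDual (C : Submodule F ((Fin n ⊕ Fin n) → F)) : sympDual (sympDual C) = C := by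
  simp only [sympDual_eq_orthogonal]
  exact LinearMap.BilinForm.orthogonal_orthogonal nondegenerate_toBilin'_Omat
    isAlt_toBilin'_Omat.isRefl C

section Blocks

variable {ι₁ ι₂ : Type*} (P₁ Q₁ : Matrix ι₁ (Fin n) F) (P₂ Q₂ : Matrix ι₂ (Fin n) F)

lemma fromBlocks_mul_Omat_mul_transpose_s16 :
    fromBlocks P₁ Q₁ P₂ Q₂ * Omat F n * (fromBlocks P₁ Q₁ P₂ Q₂)ᵀ =
      fromBlocks (P₁ * Q₁ᵀ - Q₁ * P₁ᵀ) (P₁ * Q₂ᵀ - Q₁ * P₂ᵀ)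
        (P₂ * Q₁ᵀ - Q₂ * P₁ᵀ) (P₂ * Q₂ᵀ - Q₂ * P₂ᵀ) := by
  simp [Omat, fromBlocks_multiply, fromBlocks_transpose, sub_eq_add_neg, add_comm]

lemma fromBlocks_mul_Omat_mul_transpose_eq_zero_iff :
    fromBlocks P₁ Q₁ P₂ Q₂ * Omat F n * (fromBlocks P₁ Q₁ P₂ Q₂)ᵀ = 0 ↔
      P₁ * Q₁ᵀ = Q₁ * P₁ᵀ ∧ P₂ * Q₂ᵀ = Q₂ * P₂ᵀ ∧ P₁ * Q₂ᵀ = Q₁ * P₂ᵀ := by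
  have lower_left : P₂ * Q₁ᵀ = Q₂ * P₁ᵀ ↔ P₁ * Q₂ᵀ = Q₁ * P₂ᵀ := by
    rw [← transpose_inj]
    simp only [transpose_mul, transpose_transpose]
    exact eq_comm
  rw [fromBlocks_mul_Omat_mul_transpose_s16, ← fromBlocks_zero, fromBlocks_inj]
  simp only [sub_eq_zero, lower_left]
  tauto

theorem twoGenQC_dualContaining_iff_matrix_general (C : Submodule F ((Fin n ⊕ Fin n) → F))
    (hH : rowSpace (fromBlocks P₁ Q₁ P₂ Q₂) = sympDual C) :
    sympDual C ≤ C ↔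
      P₁ * Q₁ᵀ = Q₁ * P₁ᵀ ∧ P₂ * Q₂ᵀ = Q₂ * P₂ᵀ ∧ P₁ * Q₂ᵀ = Q₁ * P₂ᵀ := by
  have hC : sympDual (rowSpace (fromBlocks P₁ Q₁ P₂ Q₂)) = C := by rw [hH, sympDual_sympDual]
  calc sympDual C ≤ C
      ↔ rowSpace (fromBlocks P₁ Q₁ P₂ Q₂) ≤ sympDual (rowSpace (fromBlocks P₁ Q₁ P₂ Q₂)) := by
        rw [hC, hH]
    _ ↔ fromBlocks P₁ Q₁ P₂ Q₂ * Omat F n * (fromBlocks P₁ Q₁ P₂ Q₂)ᵀ = 0 :=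
        rowSpace_le_sympDual_rowSpace_iff _ _
    _ ↔ _ := fromBlocks_mul_Omat_mul_transpose_eq_zero_iff P₁ Q₁ P₂ Q₂

end Blocks

/-- Suppose the two-generator QC code `C` has a parity-check
matrix `H = ((P₁, Q₁), (P₂, Q₂))`, built from the circulant matrices of
`p₁, q₁, p₂, q₂`, whose row space is `C^{⊥s}`. Then `C` is symplectic
dual-containing iff `P₁Q₁ᵗ = Q₁P₁ᵗ`, `P₂Q₂ᵗ = Q₂P₂ᵗ` and `P₁Q₂ᵗ = Q₁P₂ᵗ`. -/
theorem twoGenQC_dualContaining_iff_matrix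
    {F : Type*} [Field F] [Fintype F] {n : ℕ} (hn : n ≠ 0)
    (p₁ q₁ p₂ q₂ : AdjoinRoot (X ^ n - 1 : F[X]))
    (P₁ Q₁ P₂ Q₂ : Matrix (Fin n) (Fin n) F)
    (hP₁ : P₁ = Matrix.circulant (toVecL hn p₁))
    (hQ₁ : Q₁ = Matrix.circulant (toVecL hn q₁))
    (hP₂ : P₂ = Matrix.circulant (toVecL hn p₂))
    (hQ₂ : Q₂ = Matrix.circulant (toVecL hn q₂))
    (C : Submodule F ((Fin n ⊕ Fin n) → F))
    (hH : rowSpace (Matrix.fromBlocks P₁ Q₁ P₂ Q₂) = sympDual C) :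
    sympDual C ≤ C ↔
      P₁ * Q₁ᵀ = Q₁ * P₁ᵀ ∧ P₂ * Q₂ᵀ = Q₂ * P₂ᵀ ∧ P₁ * Q₂ᵀ = Q₁ * P₂ᵀ :=
  twoGenQC_dualContaining_iff_matrix_general P₁ Q₁ P₂ Q₂ C hH

end
end
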